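/- Let q̲ = min_i q_i and q̄ = max_i q_i, and set F_{q̲} = q̲ I + (1 − q̲) F₀ and F_{q̄} = q̄ I + (1 − q̄) F₀. All three matrices F_{q̲}, F_Q, F_{q̄} have only real eigenvalues, and if for each of them the n eigenvalues (counted with multiplicity) are listed in decreasing order, then for every index i the i-th eigenvalue of F_{q̲} is less than or equal to the i-th eigenvalue of F_Q, which in turn is less than or equal to the i-th eigenvalue of F_{q̄}. -/

import Mathlib

open Matrix

lemma aux_diag {n : ℕ} (S : Matrix (Fin n) (Fin n) ℝ) (hS : S.IsHermitian) (a : Fin n → ℝ)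
    (ha : S.charpoly.roots = Multiset.map a Finset.univ.val) (hanti : Antitone a) :
    ∃ P : Matrix (Fin n) (Fin n) ℝ, Pᵀ * P = 1 ∧ S = Pᵀ * diagonal a * P := by
  set e := hS.eigenvalues with he
  set σ := Tuple.sort (fun i => - e i) with hσ
  have hmono : Antitone (e ∘ σ) := by
    intro i j hij
    have := Tuple.monotone_sort (fun i => - e i) hij
    simp only [Function.comp_apply, neg_le_neg_iff] at this
    exact this
  have haσ : a = e ∘ σ := by
    apply List.ofFn_injective
    apply List.Perm.eq_of_sortedGE hanti.sortedGE_ofFn hmono.sortedGE_ofFn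
    have h1 : S.charpoly.roots = Multiset.map e Finset.univ.val := by
      rw [hS.roots_charpoly_eq_eigenvalues]; rfl
    rw [ha, Fin.univ_val_map, Fin.univ_val_map] at h1
    exact (Multiset.coe_eq_coe.mp h1).trans (Equiv.Perm.ofFn_comp_perm σ e).symm
  have hspec := hS.spectral_theorem
  rw [Unitary.conjStarAlgAut_apply] at hspec
  set U : Matrix (Fin n) (Fin n) ℝ := hS.eigenvectorUnitary.1 with hU
  have hUU : U * Uᵀ = 1 := by
    have := Unitary.coe_mul_star_self hS.eigenvectorUnitary
    simpa [star_eq_conjTranspose] using this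
  have hspec2 : S = U * diagonal e * Uᵀ := by
    rw [← conjTranspose_eq_transpose_of_trivial]
    exact hspec
  refine ⟨Uᵀ.submatrix σ id, ?_, ?_⟩
  · rw [← hUU, transpose_submatrix, transpose_transpose, submatrix_mul_equiv]
    simp
  · rw [haσ, ← submatrix_diagonal_equiv, transpose_submatrix, transpose_transpose,
      submatrix_mul_equiv, submatrix_mul_equiv]
    simpa using hspec2

lemma aux_quad {n : ℕ} (P : Matrix (Fin n) (Fin n) ℝ) (a x : Fin n → ℝ) :
    x ⬝ᵥ (Pᵀ * diagonal a * P) *ᵥ x = ∑ j, a j * (P *ᵥ x) j ^ 2 := by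
  rw [← mulVec_mulVec, ← mulVec_mulVec, dotProduct_mulVec, vecMul_transpose]
  simp only [dotProduct, mulVec_diagonal]
  exact Finset.sum_congr rfl fun j _ => by ring

lemma aux_weyl {n : ℕ} (S T : Matrix (Fin n) (Fin n) ℝ) (hS : S.IsHermitian) (hT : T.IsHermitian)
    (hST : ∀ x : Fin n → ℝ, x ⬝ᵥ S *ᵥ x ≤ x ⬝ᵥ T *ᵥ x) (a b : Fin n → ℝ)
    (ha : S.charpoly.roots = Multiset.map a Finset.univ.val) (haa : Antitone a)
    (hb : T.charpoly.roots = Multiset.map b Finset.univ.val) (hbb : Antitone b) (i : Fin n) :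
    a i ≤ b i := by
  obtain ⟨P, hP, hSP⟩ := aux_diag S hS a ha haa
  obtain ⟨R, hR, hTR⟩ := aux_diag T hT b hb hbb
  let f : (Fin n → ℝ) →ₗ[ℝ] ({j : Fin n // j ≠ i} → ℝ) :=
    LinearMap.pi fun j => if i < j.1 then LinearMap.proj j.1 ∘ₗ P.mulVecLin
      else LinearMap.proj j.1 ∘ₗ R.mulVecLin
  have hker : LinearMap.ker f ≠ ⊥ := by
    apply LinearMap.ker_ne_bot_of_finrank_lt
    have := i.pos
    simp [Fintype.card_subtype_compl]
    omega
  obtain ⟨x, hx, hx0⟩ := (Submodule.ne_bot_iff _).mp hker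
  have hfx : f x = 0 := hx
  have h1 : ∀ j, i < j → (P *ᵥ x) j = 0 := by
    intro j hj
    have := congrFun hfx ⟨j, hj.ne'⟩
    simpa [f, hj] using this
  have h2 : ∀ j, j < i → (R *ᵥ x) j = 0 := by
    intro j hj
    have := congrFun hfx ⟨j, hj.ne⟩
    simpa [f, hj.not_gt] using this
  have norm_eq : ∀ P : Matrix (Fin n) (Fin n) ℝ, Pᵀ * P = 1 →
      ∑ j, (P *ᵥ x) j ^ 2 = x ⬝ᵥ x := by
    intro P hP
    have := aux_quad P (fun _ => 1) x
    simp only [diagonal_one, mul_one, hP, one_mulVec, one_mul] at this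
    exact this.symm
  have hpos : 0 < x ⬝ᵥ x := by
    have := Matrix.dotProduct_star_self_pos_iff.mpr hx0
    simpa using this
  have h3 : a i * (x ⬝ᵥ x) ≤ x ⬝ᵥ S *ᵥ x := by
    rw [hSP, aux_quad, ← norm_eq P hP, Finset.mul_sum]
    refine Finset.sum_le_sum fun j _ => ?_
    rcases lt_or_ge i j with h | h
    · simp [h1 j h]
    · exact mul_le_mul_of_nonneg_right (haa h) (sq_nonneg _)
  have h4 : x ⬝ᵥ T *ᵥ x ≤ b i * (x ⬝ᵥ x) := by
    rw [hTR, aux_quad, ← norm_eq R hR, Finset.mul_sum]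
    refine Finset.sum_le_sum fun j _ => ?_
    rcases lt_or_ge j i with h | h
    · simp [h2 j h]
    · exact mul_le_mul_of_nonneg_right (hbb h) (sq_nonneg _)
  exact le_of_mul_le_mul_right (h3.trans ((hST x).trans h4)) hpos

lemma aux_real {n : ℕ} (F S : Matrix (Fin n) (Fin n) ℝ) (hS : S.IsHermitian)
    (h : F.charpoly = S.charpoly) (μ : ℂ)
    (hμ : ∃ v : Fin n → ℂ, v ≠ 0 ∧ (F.map Complex.ofReal).mulVec v = μ • v) : μ.im = 0 := by
  obtain ⟨v, hv, hFv⟩ := hμ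
  have hdet : (Matrix.scalar (Fin n) μ - F.map Complex.ofReal).det = 0 := by
    rw [← exists_mulVec_eq_zero_iff]
    refine ⟨v, hv, ?_⟩
    rw [sub_mulVec, hFv]
    ext j
    simp [mulVec_diagonal]
  rw [← eval_charpoly] at hdet
  have hm : (F.map Complex.ofReal).charpoly = F.charpoly.map Complex.ofRealHom :=
    charpoly_map F Complex.ofRealHom
  rw [hm, h, hS.charpoly_eq, Polynomial.map_prod, Polynomial.eval_prod,
    Finset.prod_eq_zero_iff] at hdet
  obtain ⟨j, -, hj⟩ := hdet
  simp [sub_eq_zero] at hj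
  rw [hj]; simp

/-- The symmetric matrix similar to `1 - W L` when `L = Bᵀ B` and `W = diagonal w`. -/
noncomputable def auxSym {n : ℕ} (B : Matrix (Fin n) (Fin n) ℝ) (w : Fin n → ℝ) :
    Matrix (Fin n) (Fin n) ℝ := 1 - B * diagonal w * Bᵀ

lemma auxSym_herm {n : ℕ} (B : Matrix (Fin n) (Fin n) ℝ) (w : Fin n → ℝ) :
    (auxSym B w).IsHermitian := by
  simp [Matrix.IsHermitian, auxSym, conjTranspose_eq_transpose_of_trivial, transpose_sub,
    transpose_mul, mul_assoc]

lemma auxSym_charpoly {n : ℕ} (B : Matrix (Fin n) (Fin n) ℝ) (w : Fin n → ℝ) :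
    (1 - diagonal w * (Bᵀ * B)).charpoly = (auxSym B w).charpoly := by
  have e0 : scalar (Fin n) (-1 : ℝ) = -1 := by rw [map_neg, map_one]
  have e1 : 1 - diagonal w * (Bᵀ * B) = (-diagonal w * Bᵀ) * B - scalar (Fin n) (-1 : ℝ) := by
    rw [e0]; noncomm_ring
  have e2 : auxSym B w = B * (-diagonal w * Bᵀ) - scalar (Fin n) (-1 : ℝ) := by
    rw [e0, auxSym]; noncomm_ring
  rw [e1, e2, charpoly_sub_scalar, charpoly_sub_scalar, charpoly_mul_comm]

lemma auxSym_mono {n : ℕ} (B : Matrix (Fin n) (Fin n) ℝ) (w z : Fin n → ℝ) (h : ∀ i, z i ≤ w i)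
    (x : Fin n → ℝ) : x ⬝ᵥ auxSym B w *ᵥ x ≤ x ⬝ᵥ auxSym B z *ᵥ x := by
  have h1 := aux_quad Bᵀ w x
  have h2 := aux_quad Bᵀ z x
  rw [transpose_transpose] at h1 h2
  simp only [auxSym, sub_mulVec, dotProduct_sub, h1, h2]
  have : ∑ j, z j * (Bᵀ *ᵥ x) j ^ 2 ≤ ∑ j, w j * (Bᵀ *ᵥ x) j ^ 2 :=
    Finset.sum_le_sum fun j _ => mul_le_mul_of_nonneg_right (h j) (sq_nonneg _)
  linarith

lemma aux_lap {n : ℕ} (G : SimpleGraph (Fin n)) [DecidableRel G.Adj] :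
    ∃ B : Matrix (Fin n) (Fin n) ℝ, G.lapMatrix ℝ = Bᵀ * B := by
  open scoped MatrixOrder in
  obtain ⟨B, hB⟩ := CStarAlgebra.nonneg_iff_eq_star_mul_self.mp (G.posSemidef_lapMatrix ℝ).nonneg
  exact ⟨B, by rw [hB, star_eq_conjTranspose, conjTranspose_eq_transpose_of_trivial]⟩

lemma aux_F {n : ℕ} (G : SimpleGraph (Fin n)) [DecidableRel G.Adj]
    (hdeg : ∀ i, 0 < G.degree i) (q : Fin n → ℝ) :
    diagonal q + (1 - diagonal q) *
      ((diagonal fun i => (G.degree i : ℝ))⁻¹ * G.adjMatrix ℝ) =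
    1 - diagonal (fun i => (1 - q i) / G.degree i) * G.lapMatrix ℝ := by
  have hinv : (diagonal fun i => (G.degree i : ℝ))⁻¹ = diagonal fun i => (G.degree i : ℝ)⁻¹ := by
    apply inv_eq_right_inv
    rw [diagonal_mul_diagonal, ← diagonal_one]
    congr 1; ext i
    exact mul_inv_cancel₀ (by exact_mod_cast (hdeg i).ne')
  have h1 : (1 - diagonal q : Matrix (Fin n) (Fin n) ℝ) = diagonal fun i => 1 - q i := by
    rw [← diagonal_one, diagonal_sub]
  rw [hinv, h1]
  ext i j
  have hi : (G.degree i : ℝ) ≠ 0 := by exact_mod_cast (hdeg i).ne'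
  simp only [SimpleGraph.lapMatrix, SimpleGraph.degMatrix, Matrix.add_apply, Matrix.sub_apply, diagonal_mul]
  by_cases hij : i = j
  · subst hij
    simp
    field_simp
    try ring
  · simp [hij, one_apply_ne hij]
    field_simp

theorem stmt_5 (n : ℕ) (hn : 2 ≤ n) (G : SimpleGraph (Fin n)) [DecidableRel G.Adj]
    (hdeg : ∀ i, 0 < G.degree i)
    (q : Fin n → ℝ) (hq : ∀ i, q i < 1)
    (qlo qhi : ℝ)
    (hqlo : (∀ i, qlo ≤ q i) ∧ ∃ i, q i = qlo)
    (hqhi : (∀ i, q i ≤ qhi) ∧ ∃ i, q i = qhi)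
    (A D F0 Q FQ Flo Fhi : Matrix (Fin n) (Fin n) ℝ)
    (hA : A = G.adjMatrix ℝ)
    (hD : D = Matrix.diagonal fun i => (G.degree i : ℝ))
    (hF0 : F0 = D⁻¹ * A)
    (hQ : Q = Matrix.diagonal q)
    (hFQ : FQ = Q + (1 - Q) * F0)
    (hFlo : Flo = qlo • (1 : Matrix (Fin n) (Fin n) ℝ) + (1 - qlo) • F0)
    (hFhi : Fhi = qhi • (1 : Matrix (Fin n) (Fin n) ℝ) + (1 - qhi) • F0) :
    (∀ μ : ℂ, (∃ v : Fin n → ℂ, v ≠ 0 ∧ (Flo.map Complex.ofReal).mulVec v = μ • v) → μ.im = 0) ∧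
    (∀ μ : ℂ, (∃ v : Fin n → ℂ, v ≠ 0 ∧ (FQ.map Complex.ofReal).mulVec v = μ • v) → μ.im = 0) ∧
    (∀ μ : ℂ, (∃ v : Fin n → ℂ, v ≠ 0 ∧ (Fhi.map Complex.ofReal).mulVec v = μ • v) → μ.im = 0) ∧
    ∀ a b c : Fin n → ℝ,
      Flo.charpoly.roots = Multiset.map a Finset.univ.val → Antitone a →
      FQ.charpoly.roots = Multiset.map b Finset.univ.val → Antitone b →
      Fhi.charpoly.roots = Multiset.map c Finset.univ.val → Antitone c →
      ∀ i, a i ≤ b i ∧ b i ≤ c i := by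
  subst hA hD hF0 hQ
  obtain ⟨B, hB⟩ := aux_lap G
  have hlo := aux_F G hdeg (fun _ => qlo)
  have hhi := aux_F G hdeg (fun _ => qhi)
  have hmid := aux_F G hdeg q
  have hs : ∀ t : ℝ, (diagonal fun _ => t : Matrix (Fin n) (Fin n) ℝ) = t • 1 := fun t => by
    rw [smul_one_eq_diagonal]
  have hs2 : ∀ t : ℝ, (1 - t • 1 : Matrix (Fin n) (Fin n) ℝ) = (1 - t) • 1 := fun t => by
    rw [sub_smul, one_smul]
  rw [hs, hs2, smul_mul_assoc, one_mul, ← hFlo, hB] at hlo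
  rw [hs, hs2, smul_mul_assoc, one_mul, ← hFhi, hB] at hhi
  rw [← hFQ, hB] at hmid
  have clo := auxSym_charpoly B (fun i => (1 - qlo) / G.degree i)
  have chi := auxSym_charpoly B (fun i => (1 - qhi) / G.degree i)
  have cmid := auxSym_charpoly B (fun i => (1 - q i) / G.degree i)
  rw [← hlo] at clo
  rw [← hhi] at chi
  rw [← hmid] at cmid
  refine ⟨aux_real _ _ (auxSym_herm _ _) clo, aux_real _ _ (auxSym_herm _ _) cmid,
    aux_real _ _ (auxSym_herm _ _) chi, ?_⟩
  intro a b c ha haa hb hbb hc hcc i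
  rw [clo] at ha
  rw [cmid] at hb
  rw [chi] at hc
  refine ⟨aux_weyl _ _ (auxSym_herm _ _) (auxSym_herm _ _) (auxSym_mono B _ _ fun j => ?_)
      a b ha haa hb hbb i,
    aux_weyl _ _ (auxSym_herm _ _) (auxSym_herm _ _) (auxSym_mono B _ _ fun j => ?_)
      b c hb hbb hc hcc i⟩
  · exact div_le_div_of_nonneg_right (by linarith [hqlo.1 j]) (Nat.cast_nonneg _)
  · exact div_le_div_of_nonneg_right (by linarith [hqhi.1 j]) (Nat.cast_nonneg _)
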